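/- Entropic uncertainty principle with weights and localization operator: let H be a complex Hilbert space, (π_k)_{k=1}^N and (τ_j)_{j=1}^M two partitions of unity of bounded operators on H, v = (v_k)_{k=1}^N and w = (w_j)_{j=1}^M families of positive real numbers with V = max_k v_k and W = max_j w_j, O a bounded operator on H, U a linear isometry of H, and ε ≥ 0. Set c = max_{j,k} w_j · v_k · ‖τ_j U π_k* O‖ (operator norm). Then every unit vector ψ ∈ H satisfying ‖(Id − O) π_k ψ‖ ≤ ε for all k = 1,…,N satisfies p_{τ,w}(Uψ) + p_{π,v}(ψ) ≥ −2 · log( c + N·V·W·ε ). -/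

import Mathlib

open Finset

/-- `η(s) = -s log s`. -/
noncomputable def eta (s : ℝ) : ℝ := -s * Real.log s

/-- Pressure of a unit vector with respect to a quantum partition of unity `π`
and weights `v`. -/
noncomputable def pressure {H : Type*} [NormedAddCommGroup H] [InnerProductSpace ℂ H]
    {N : ℕ} (π : Fin N → H →L[ℂ] H) (v : Fin N → ℝ) (ψ : H) : ℝ :=
  (∑ k, eta (‖π k ψ‖ ^ 2)) - ∑ k, ‖π k ψ‖ ^ 2 * Real.log (v k ^ 2)


/-!
Absorbing the isometry `U` into `τ` leaves two partitions `σ`, `π` and a unit vector `ψ`. The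
numbers `Q j k = ⟪σ j ψ, σ j ((π k)† (π k ψ))⟫` form a complex-valued joint distribution of the
outcome probabilities `‖σ j ψ‖ ^ 2` and `‖π k ψ‖ ^ 2`, and inserting phases depending separately on
`j` and on `k` keeps the total at most `1` in modulus. The three lines theorem then yields
a Jensen inequality for `Q`: the entire function `F z = ∑ exp (z * γ j k) * Q j k` satisfies
`F 0 = 1`, is bounded by `1` on the imaginary axis and by `∑ exp (γ j k) * ‖Q j k‖` on `re z = 1`,
so comparing derivatives at `0` bounds `exp (∑ γ j k * Q j k)` by the latter sum. Taking
`γ j k = log (‖σ j ψ‖ * w j) + log (‖π k ψ‖ * v k)` makes the left-hand side the exponential of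
minus half the total pressure.
-/

section ThreeLines

open Complex.HadamardThreeLines

theorem hasDerivWithinAt_Ioi_le_of_le {f g : ℝ → ℝ} {f' g' a b : ℝ} (hab : a < b)
    (hf : HasDerivWithinAt f f' (Set.Ioi a) a) (hg : HasDerivWithinAt g g' (Set.Ioi a) a)
    (ha : f a = g a) (hfg : ∀ t ∈ Set.Ioo a b, f t ≤ g t) : f' ≤ g' := by
  refine le_of_tendsto_of_tendsto
    ((hasDerivWithinAt_iff_tendsto_slope' Set.self_notMem_Ioi).1 hf)
    ((hasDerivWithinAt_iff_tendsto_slope' Set.self_notMem_Ioi).1 hg) ?_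
  filter_upwards [Ioo_mem_nhdsGT hab] with t ht
  rw [slope_def_field, slope_def_field, ha]
  have : 0 ≤ t - a := sub_nonneg.2 ht.1.le
  gcongr
  exact hfg t ht

theorem re_deriv_zero_le_log_of_norm_le {f : ℂ → ℂ} {f' : ℂ} {C : ℝ} (hC : 0 < C)
    (hd : DiffContOnCl ℂ f (verticalStrip 0 1))
    (hB : BddAbove ((norm ∘ f) '' verticalClosedStrip 0 1))
    (hf₀ : ∀ z : ℂ, z.re = 0 → ‖f z‖ ≤ 1) (hf₁ : ∀ z : ℂ, z.re = 1 → ‖f z‖ ≤ C)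
    (hf0 : f 0 = 1) (hf' : HasDerivAt f f' 0) :
    f'.re ≤ Real.log C := by
  have hre : HasDerivAt (fun t : ℝ => (f t).re) f'.re 0 :=
    HasDerivAt.real_of_complex (by simpa using hf')
  have hpow : HasDerivAt (fun t : ℝ => C ^ t) (Real.log C) 0 := by
    simpa using (Real.hasStrictDerivAt_const_rpow hC 0).hasDerivAt
  refine hasDerivWithinAt_Ioi_le_of_le zero_lt_one hre.hasDerivWithinAt
    hpow.hasDerivWithinAt (by simp [hf0]) fun t ht => ?_
  calc (f t).re ≤ ‖f t‖ := Complex.re_le_norm _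
    _ ≤ 1 ^ (1 - (t : ℂ).re) * C ^ (t : ℂ).re :=
      norm_le_interp_of_mem_verticalClosedStrip₀₁' f ⟨ht.1.le, ht.2.le⟩ hd hB hf₀ hf₁
    _ = C ^ t := by rw [Real.one_rpow, one_mul, Complex.ofReal_re]

end ThreeLines

section Jensen

variable {ι : Type*} [Fintype ι]

theorem norm_sum_cexp_mul_le (γ : ι → ℝ) (Q : ι → ℂ) (z : ℂ) :
    ‖∑ i, Complex.exp (z * γ i) * Q i‖ ≤ ∑ i, Real.exp (z.re * γ i) * ‖Q i‖ := by
  refine (norm_sum_le _ _).trans_eq (Finset.sum_congr rfl fun i _ => ?_)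
  rw [norm_mul, Complex.norm_exp, Complex.re_mul_ofReal]

theorem exp_re_sum_mul_le_sum_exp_mul_norm (γ : ι → ℝ) (Q : ι → ℂ) (hQ : ∑ i, Q i = 1)
    (hphase : ∀ z : ℂ, z.re = 0 → ‖∑ i, Complex.exp (z * γ i) * Q i‖ ≤ 1) :
    Real.exp (∑ i, (γ i : ℂ) * Q i).re ≤ ∑ i, Real.exp (γ i) * ‖Q i‖ := by
  have hpos : 0 < ∑ i, Real.exp (γ i) * ‖Q i‖ := by
    obtain ⟨i, -, hi⟩ := Finset.exists_ne_zero_of_sum_ne_zero (hQ.trans_ne one_ne_zero)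
    exact Finset.sum_pos' (fun i _ => by positivity) ⟨i, Finset.mem_univ i, by positivity⟩
  have hdiff : Differentiable ℂ fun z : ℂ => ∑ i, Complex.exp (z * γ i) * Q i := by fun_prop
  have hderiv : HasDerivAt (fun z : ℂ => ∑ i, Complex.exp (z * γ i) * Q i)
      (∑ i, (γ i : ℂ) * Q i) 0 := by
    refine HasDerivAt.fun_sum fun i _ => ?_
    simpa using (((hasDerivAt_id (0 : ℂ)).mul_const (γ i : ℂ)).cexp).mul_const (Q i)
  rw [← Real.le_log_iff_exp_le hpos]
  refine re_deriv_zero_le_log_of_norm_le hpos hdiff.diffContOnCl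
    ⟨∑ i, Real.exp |γ i| * ‖Q i‖, ?_⟩ hphase (fun z hz => ?_) (by simpa using hQ) hderiv
  · rintro _ ⟨z, ⟨hz0, hz1⟩, rfl⟩
    refine (norm_sum_cexp_mul_le γ Q z).trans (Finset.sum_le_sum fun i _ => ?_)
    gcongr
    calc z.re * γ i ≤ |z.re * γ i| := le_abs_self _
      _ = z.re * |γ i| := by rw [abs_mul, abs_of_nonneg hz0]
      _ ≤ |γ i| := mul_le_of_le_one_left (abs_nonneg _) hz1
  · simpa only [hz, one_mul] using norm_sum_cexp_mul_le γ Q z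

end Jensen

section Localization

variable {𝕜 E F : Type*} [NontriviallyNormedField 𝕜]
  [SeminormedAddCommGroup E] [NormedSpace 𝕜 E] [SeminormedAddCommGroup F] [NormedSpace 𝕜 F]
  {T : E →L[𝕜] F} {O : E →L[𝕜] E} {x : E} {ε : ℝ}

theorem norm_apply_le_of_localized (hT : ‖T‖ ≤ 1) (hx : ‖(1 - O) x‖ ≤ ε) :
    ‖T x‖ ≤ ‖T ∘L O‖ * ‖x‖ + ε := by
  calc ‖T x‖ = ‖(T ∘L O) x + T ((1 - O) x)‖ := by simp
    _ ≤ ‖T ∘L O‖ * ‖x‖ + ε :=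
      norm_add_le_of_le ((T ∘L O).le_opNorm x)
        (by simpa only [one_mul] using T.le_of_opNorm_le_of_le hT hx)

theorem norm_mul_norm_apply_le_of_localized {a b c : ℝ} (hT : ‖T‖ ≤ 1) (hx1 : ‖x‖ ≤ 1)
    (ha : 0 ≤ a) (hab : a ≤ b) (hc : a * ‖T ∘L O‖ ≤ c) (hx : ‖(1 - O) x‖ ≤ ε) :
    ‖x‖ * (a * ‖T x‖) ≤ ‖x‖ ^ 2 * c + b * ε := by
  have hε : 0 ≤ ε := (norm_nonneg _).trans hx
  calc ‖x‖ * (a * ‖T x‖) ≤ ‖x‖ * (a * (‖T ∘L O‖ * ‖x‖ + ε)) := by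
        gcongr
        exact norm_apply_le_of_localized hT hx
    _ = ‖x‖ ^ 2 * (a * ‖T ∘L O‖) + ‖x‖ * (a * ε) := by ring
    _ ≤ ‖x‖ ^ 2 * c + 1 * (b * ε) := by gcongr
    _ = ‖x‖ ^ 2 * c + b * ε := by rw [one_mul]

end Localization

theorem sum_eta_sq_sub_sum_sq_mul_log {ι : Type*} [Fintype ι] (x : ι → ℝ) {u : ι → ℝ}
    (hu : ∀ i, u i ≠ 0) :
    ∑ i, eta (x i ^ 2) - ∑ i, x i ^ 2 * Real.log (u i ^ 2) =
      -2 * ∑ i, x i ^ 2 * Real.log (x i * u i) := by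
  rw [← Finset.sum_sub_distrib, Finset.mul_sum]
  refine Finset.sum_congr rfl fun i _ => ?_
  rcases eq_or_ne (x i) 0 with hx | hx
  · simp [hx, eta]
  · rw [eta, Real.log_mul hx (hu i), Real.log_pow, Real.log_pow]
    push_cast
    ring

open ContinuousLinearMap (adjoint)
open scoped InnerProductSpace

/-- A (quantum) partition of unity. The operators may map into a second Hilbert space: composed with
an isometry `K →L[ℂ] H`, a partition of unity of `H` becomes one of `K`. -/
def IsQuantumPartition {ι H E : Type*} [Fintype ι]
    [NormedAddCommGroup H] [InnerProductSpace ℂ H] [CompleteSpace H]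
    [NormedAddCommGroup E] [InnerProductSpace ℂ E] [CompleteSpace E]
    (π : ι → H →L[ℂ] E) : Prop :=
  ∑ k, adjoint (π k) ∘L π k = 1

section Operators

variable {ι κ H K E F : Type*}
  [NormedAddCommGroup H] [InnerProductSpace ℂ H] [CompleteSpace H]
  [NormedAddCommGroup K] [InnerProductSpace ℂ K] [CompleteSpace K]
  [NormedAddCommGroup E] [InnerProductSpace ℂ E] [CompleteSpace E]
  [NormedAddCommGroup F] [InnerProductSpace ℂ F]

namespace IsQuantumPartition

variable [Fintype ι] {π : ι → H →L[ℂ] E}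

theorem sum_adjoint_apply (hπ : IsQuantumPartition π) (x : H) :
    ∑ k, adjoint (π k) (π k x) = x := by
  simpa [_root_.sum_apply] using DFunLike.congr_fun hπ x

theorem sum_norm_sq_apply (hπ : IsQuantumPartition π) (x : H) :
    ∑ k, ‖π k x‖ ^ 2 = ‖x‖ ^ 2 := by
  have h : ∑ k, ⟪x, adjoint (π k) (π k x)⟫_ℂ = ⟪x, x⟫_ℂ := by rw [← inner_sum, hπ.sum_adjoint_apply]
  simp only [ContinuousLinearMap.adjoint_inner_right, inner_self_eq_norm_sq_to_K] at h
  exact_mod_cast h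

theorem norm_apply_le (hπ : IsQuantumPartition π) (k : ι) (x : H) : ‖π k x‖ ≤ ‖x‖ := by
  refine (sq_le_sq₀ (norm_nonneg _) (norm_nonneg _)).1 ?_
  rw [← hπ.sum_norm_sq_apply x]
  exact Finset.single_le_sum (f := fun k => ‖π k x‖ ^ 2) (fun _ _ => sq_nonneg _)
    (Finset.mem_univ k)

theorem norm_le_one (hπ : IsQuantumPartition π) (k : ι) : ‖π k‖ ≤ 1 :=
  (π k).opNorm_le_bound zero_le_one fun x => by simpa only [one_mul] using hπ.norm_apply_le k x

theorem norm_sum_adjoint_apply_sq_le (hπ : IsQuantumPartition π) (f : ι → E) :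
    ‖∑ k, adjoint (π k) (f k)‖ ^ 2 ≤ ∑ k, ‖f k‖ ^ 2 := by
  set s := ∑ k, adjoint (π k) (f k) with hs
  have hinner : ⟪s, s⟫_ℂ = ∑ k, ⟪π k s, f k⟫_ℂ := by
    simp only [← ContinuousLinearMap.adjoint_inner_right, ← inner_sum, ← hs]
  have hsq : ‖s‖ ^ 2 ≤ (‖s‖ ^ 2 + ∑ k, ‖f k‖ ^ 2) / 2 := by
    calc ‖s‖ ^ 2 = ‖⟪s, s⟫_ℂ‖ := by simp [inner_self_eq_norm_sq_to_K]
      _ ≤ ∑ k, ‖π k s‖ * ‖f k‖ := by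
        rw [hinner]
        exact norm_sum_le_of_le _ fun k _ => norm_inner_le_norm _ _
      _ ≤ ∑ k, (‖π k s‖ ^ 2 + ‖f k‖ ^ 2) / 2 :=
        Finset.sum_le_sum fun k _ => by linarith [two_mul_le_add_sq ‖π k s‖ ‖f k‖]
      _ = (‖s‖ ^ 2 + ∑ k, ‖f k‖ ^ 2) / 2 := by
        rw [← Finset.sum_div, Finset.sum_add_distrib, hπ.sum_norm_sq_apply]
  linarith

theorem norm_sum_adjoint_smul_apply_le (hπ : IsQuantumPartition π) {a : ι → ℂ}
    (ha : ∀ k, ‖a k‖ ≤ 1) (x : H) : ‖∑ k, adjoint (π k) (a k • π k x)‖ ≤ ‖x‖ := by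
  refine (sq_le_sq₀ (norm_nonneg _) (norm_nonneg _)).1 ?_
  calc ‖∑ k, adjoint (π k) (a k • π k x)‖ ^ 2 ≤ ∑ k, ‖a k • π k x‖ ^ 2 :=
        hπ.norm_sum_adjoint_apply_sq_le _
    _ ≤ ∑ k, ‖π k x‖ ^ 2 := by
        gcongr with k
        rw [norm_smul]
        exact mul_le_of_le_one_left (norm_nonneg _) (ha k)
    _ = ‖x‖ ^ 2 := hπ.sum_norm_sq_apply x

theorem comp_isometry (hπ : IsQuantumPartition π) {U : K →L[ℂ] H} (hU : ∀ x, ‖U x‖ = ‖x‖) :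
    IsQuantumPartition fun k => π k ∘L U := by
  ext x
  simp only [_root_.sum_apply, ContinuousLinearMap.adjoint_comp, ContinuousLinearMap.comp_apply]
  rw [← map_sum, hπ.sum_adjoint_apply]
  exact DFunLike.congr_fun (U.norm_map_iff_adjoint_comp_self.1 hU) x

end IsQuantumPartition

/-- The Kirkwood–Dirac quasiprobability of the outcomes `j` and `k`: a complex-valued joint
distribution of `‖σ j ψ‖ ^ 2` and `‖π k ψ‖ ^ 2`. -/
noncomputable def kirkwoodDirac (σ : κ → H →L[ℂ] F) (π : ι → H →L[ℂ] E) (ψ : H)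
    (j : κ) (k : ι) : ℂ :=
  ⟪σ j ψ, σ j (adjoint (π k) (π k ψ))⟫_ℂ

theorem sum_right_kirkwoodDirac [Fintype ι] (σ : κ → H →L[ℂ] F) {π : ι → H →L[ℂ] E}
    (hπ : IsQuantumPartition π) (ψ : H) (j : κ) :
    ∑ k, kirkwoodDirac σ π ψ j k = (‖σ j ψ‖ ^ 2 : ℝ) := by
  simp only [kirkwoodDirac]
  rw [← inner_sum, ← map_sum, hπ.sum_adjoint_apply, inner_self_eq_norm_sq_to_K]
  norm_cast

theorem exp_log_mul_norm_kirkwoodDirac_le (σ : κ → H →L[ℂ] F) (π : ι → H →L[ℂ] E) (ψ : H)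
    (j : κ) (k : ι) {w v : ℝ} (hw : 0 < w) (hv : 0 < v) :
    Real.exp (Real.log (‖σ j ψ‖ * w)) * Real.exp (Real.log (‖π k ψ‖ * v)) *
        ‖kirkwoodDirac σ π ψ j k‖ ≤
      ‖σ j ψ‖ ^ 2 * (‖π k ψ‖ * (w * v * ‖σ j (adjoint (π k) (π k ψ))‖)) := by
  -- `Real.exp (Real.log 0) = 1`, but `kirkwoodDirac` vanishes when either outcome is impossible.
  rcases (norm_nonneg (σ j ψ)).eq_or_lt' with hσψ | hσψ
  · simp [kirkwoodDirac, norm_eq_zero.1 hσψ]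
  rcases (norm_nonneg (π k ψ)).eq_or_lt' with hπψ | hπψ
  · simp [kirkwoodDirac, norm_eq_zero.1 hπψ]
  rw [Real.exp_log (by positivity), Real.exp_log (by positivity)]
  calc ‖σ j ψ‖ * w * (‖π k ψ‖ * v) * ‖kirkwoodDirac σ π ψ j k‖
      ≤ ‖σ j ψ‖ * w * (‖π k ψ‖ * v) * (‖σ j ψ‖ * ‖σ j (adjoint (π k) (π k ψ))‖) := by
        gcongr
        exact norm_inner_le_norm _ _
    _ = ‖σ j ψ‖ ^ 2 * (‖π k ψ‖ * (w * v * ‖σ j (adjoint (π k) (π k ψ))‖)) := by ring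

variable [CompleteSpace F]

theorem sum_left_kirkwoodDirac [Fintype κ] {σ : κ → H →L[ℂ] F} (hσ : IsQuantumPartition σ)
    (π : ι → H →L[ℂ] E) (ψ : H) (k : ι) :
    ∑ j, kirkwoodDirac σ π ψ j k = (‖π k ψ‖ ^ 2 : ℝ) := by
  simp only [kirkwoodDirac, ← ContinuousLinearMap.adjoint_inner_left (σ _)]
  rw [← sum_inner, hσ.sum_adjoint_apply, ContinuousLinearMap.adjoint_inner_right,
    inner_self_eq_norm_sq_to_K]
  norm_cast

variable [Fintype ι] [Fintype κ] {σ : κ → H →L[ℂ] F} {π : ι → H →L[ℂ] E}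

theorem norm_sum_mul_kirkwoodDirac_le (hσ : IsQuantumPartition σ) (hπ : IsQuantumPartition π)
    {b : κ → ℂ} {a : ι → ℂ} (hb : ∀ j, ‖b j‖ ≤ 1) (ha : ∀ k, ‖a k‖ ≤ 1) (ψ : H) :
    ‖∑ j, ∑ k, b j * a k * kirkwoodDirac σ π ψ j k‖ ≤ ‖ψ‖ ^ 2 := by
  have hinner : ∑ j, ∑ k, b j * a k * kirkwoodDirac σ π ψ j k =
      ⟪∑ j, adjoint (σ j) (star (b j) • σ j ψ), ∑ k, adjoint (π k) (a k • π k ψ)⟫_ℂ := by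
    simp only [sum_inner, inner_sum, ContinuousLinearMap.adjoint_inner_left, map_smul,
      inner_smul_left, inner_smul_right, kirkwoodDirac, starRingEnd_apply, star_star,
      Finset.mul_sum]
    rw [Finset.sum_comm]
    exact Finset.sum_congr rfl fun _ _ => Finset.sum_congr rfl fun _ _ => by ring
  rw [hinner, sq]
  refine (norm_inner_le_norm _ _).trans ?_
  gcongr
  · exact hσ.norm_sum_adjoint_smul_apply_le (fun j => (norm_star _).trans_le (hb j)) ψ
  · exact hπ.norm_sum_adjoint_smul_apply_le ha ψ

theorem exp_sum_mul_add_sum_mul_le (hσ : IsQuantumPartition σ) (hπ : IsQuantumPartition π)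
    {ψ : H} (hψ : ‖ψ‖ = 1) (β : κ → ℝ) (α : ι → ℝ) :
    Real.exp (∑ j, ‖σ j ψ‖ ^ 2 * β j + ∑ k, ‖π k ψ‖ ^ 2 * α k) ≤
      ∑ j, ∑ k, Real.exp (β j) * Real.exp (α k) * ‖kirkwoodDirac σ π ψ j k‖ := by
  have htotal : ∑ p : κ × ι, kirkwoodDirac σ π ψ p.1 p.2 = 1 := by
    simp only [Fintype.sum_prod_type, sum_right_kirkwoodDirac σ hπ, ← Complex.ofReal_sum,
      hσ.sum_norm_sq_apply, hψ, one_pow, Complex.ofReal_one]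
  have hmean : ∑ p : κ × ι, ((β p.1 + α p.2 : ℝ) : ℂ) * kirkwoodDirac σ π ψ p.1 p.2 =
      (∑ j, ‖σ j ψ‖ ^ 2 * β j + ∑ k, ‖π k ψ‖ ^ 2 * α k : ℝ) := by
    simp only [Complex.ofReal_add, add_mul, Finset.sum_add_distrib]
    rw [Fintype.sum_prod_type, Fintype.sum_prod_type_right]
    simp only [← Finset.mul_sum, sum_right_kirkwoodDirac σ hπ, sum_left_kirkwoodDirac hσ π]
    simp only [Complex.ofReal_sum, Complex.ofReal_mul, mul_comm]
  have hphase (z : ℂ) (hz : z.re = 0) :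
      ‖∑ p : κ × ι, Complex.exp (z * (β p.1 + α p.2 : ℝ)) * kirkwoodDirac σ π ψ p.1 p.2‖ ≤ 1 := by
    have hnorm (r : ℝ) : ‖Complex.exp (z * r)‖ ≤ 1 := by simp [Complex.norm_exp, hz]
    simpa only [Fintype.sum_prod_type, Complex.ofReal_add, mul_add, Complex.exp_add, hψ, one_pow]
      using norm_sum_mul_kirkwoodDirac_le hσ hπ (fun j => hnorm (β j)) (fun k => hnorm (α k)) ψ
  simpa only [hmean, Complex.ofReal_re, Fintype.sum_prod_type, Real.exp_add] using
    exp_re_sum_mul_le_sum_exp_mul_norm (fun p : κ × ι => β p.1 + α p.2) _ htotal hphase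

theorem norm_comp_adjoint_le_one (hσ : IsQuantumPartition σ) (hπ : IsQuantumPartition π)
    (j : κ) (k : ι) :
    ‖σ j ∘L adjoint (π k)‖ ≤ 1 := by
  refine (ContinuousLinearMap.opNorm_comp_le _ _).trans
    (mul_le_one₀ (hσ.norm_le_one j) (norm_nonneg _) ?_)
  rw [LinearIsometryEquiv.norm_map]
  exact hπ.norm_le_one k

theorem exp_sum_log_le_of_localized (hσ : IsQuantumPartition σ) (hπ : IsQuantumPartition π)
    {v : ι → ℝ} {w : κ → ℝ} (hv : ∀ k, 0 < v k) (hw : ∀ j, 0 < w j)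
    {V W : ℝ} (hV : ∀ k, v k ≤ V) (hW : ∀ j, w j ≤ W) {O : E →L[ℂ] E} {c ε : ℝ}
    (hc : ∀ j k, w j * v k * ‖σ j ∘L adjoint (π k) ∘L O‖ ≤ c) {ψ : H} (hψ : ‖ψ‖ = 1)
    (hloc : ∀ k, ‖(1 - O) (π k ψ)‖ ≤ ε) :
    Real.exp (∑ j, ‖σ j ψ‖ ^ 2 * Real.log (‖σ j ψ‖ * w j) +
        ∑ k, ‖π k ψ‖ ^ 2 * Real.log (‖π k ψ‖ * v k)) ≤
      c + Fintype.card ι * V * W * ε := by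
  calc _ ≤ ∑ j, ∑ k, Real.exp (Real.log (‖σ j ψ‖ * w j)) * Real.exp (Real.log (‖π k ψ‖ * v k)) *
          ‖kirkwoodDirac σ π ψ j k‖ := exp_sum_mul_add_sum_mul_le hσ hπ hψ _ _
    _ ≤ ∑ j, ∑ k, ‖σ j ψ‖ ^ 2 * (‖π k ψ‖ ^ 2 * c + V * W * ε) := by
      refine Finset.sum_le_sum fun j _ => Finset.sum_le_sum fun k _ => ?_
      refine (exp_log_mul_norm_kirkwoodDirac_le σ π ψ j k (hw j) (hv k)).trans ?_
      gcongr
      exact norm_mul_norm_apply_le_of_localized (norm_comp_adjoint_le_one hσ hπ j k)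
        (hψ ▸ hπ.norm_apply_le k ψ) (mul_nonneg (hw j).le (hv k).le)
        (by rw [mul_comm]; exact mul_le_mul (hV k) (hW j) (hw j).le ((hv k).le.trans (hV k)))
        (hc j k) (hloc k)
    _ = c + Fintype.card ι * V * W * ε := by
      simp only [← Finset.mul_sum, ← Finset.sum_mul, Finset.sum_add_distrib, Finset.sum_const,
        hσ.sum_norm_sq_apply, hπ.sum_norm_sq_apply, hψ, Finset.card_univ, nsmul_eq_mul]
      ring

theorem entropic_uncertainty_weighted_localized_general {τ : κ → K →L[ℂ] F}
    (hπ : IsQuantumPartition π) (hτ : IsQuantumPartition τ)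
    {v : ι → ℝ} {w : κ → ℝ} (hv : ∀ k, 0 < v k) (hw : ∀ j, 0 < w j)
    {V W : ℝ} (hV : ∀ k, v k ≤ V) (hW : ∀ j, w j ≤ W)
    {O : E →L[ℂ] E} {U : H →L[ℂ] K} (hU : ∀ x, ‖U x‖ = ‖x‖) {c ε : ℝ}
    (hc : ∀ j k, w j * v k * ‖τ j ∘L U ∘L adjoint (π k) ∘L O‖ ≤ c) {ψ : H} (hψ : ‖ψ‖ = 1)
    (hloc : ∀ k, ‖(1 - O) (π k ψ)‖ ≤ ε) :
    -2 * Real.log (c + Fintype.card ι * V * W * ε) ≤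
      (∑ j, eta (‖τ j (U ψ)‖ ^ 2) - ∑ j, ‖τ j (U ψ)‖ ^ 2 * Real.log (w j ^ 2)) +
        (∑ k, eta (‖π k ψ‖ ^ 2) - ∑ k, ‖π k ψ‖ ^ 2 * Real.log (v k ^ 2)) := by
  have hexp := exp_sum_log_le_of_localized (hτ.comp_isometry hU) hπ hv hw hV hW hc hψ hloc
  have hlog := (Real.le_log_iff_exp_le ((Real.exp_pos _).trans_le hexp)).2 hexp
  rw [sum_eta_sq_sub_sum_sq_mul_log _ fun j => (hw j).ne',
    sum_eta_sq_sub_sum_sq_mul_log _ fun k => (hv k).ne', ← mul_add]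
  exact mul_le_mul_of_nonpos_left hlog (by norm_num)

end Operators

/-- Entropic uncertainty principle with weights and localization operator. -/
theorem entropic_uncertainty_weighted_localized
    {H : Type*} [NormedAddCommGroup H] [InnerProductSpace ℂ H] [CompleteSpace H]
    {N M : ℕ} [NeZero N] [NeZero M]
    (π : Fin N → H →L[ℂ] H) (τ : Fin M → H →L[ℂ] H)
    (hπ : ∑ k, ContinuousLinearMap.adjoint (π k) ∘L π k = (1 : H →L[ℂ] H))
    (hτ : ∑ j, ContinuousLinearMap.adjoint (τ j) ∘L τ j = (1 : H →L[ℂ] H))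
    (v : Fin N → ℝ) (w : Fin M → ℝ) (hv : ∀ k, 0 < v k) (hw : ∀ j, 0 < w j)
    (V W : ℝ) (hV : V = Finset.univ.sup' Finset.univ_nonempty v)
    (hW : W = Finset.univ.sup' Finset.univ_nonempty w)
    (O : H →L[ℂ] H)
    (U : H →L[ℂ] H) (hU : ∀ x, ‖U x‖ = ‖x‖)
    (ε : ℝ) (hε : 0 ≤ ε)
    (c : ℝ)
    (hc : c = Finset.univ.sup' Finset.univ_nonempty fun jk : Fin M × Fin N =>
        w jk.1 * v jk.2 * ‖τ jk.1 ∘L U ∘L ContinuousLinearMap.adjoint (π jk.2) ∘L O‖)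
    (ψ : H) (hψ : ‖ψ‖ = 1)
    (hloc : ∀ k, ‖((1 : H →L[ℂ] H) - O) (π k ψ)‖ ≤ ε) :
    pressure τ w (U ψ) + pressure π v ψ ≥ -2 * Real.log (c + N * V * W * ε) := by
  subst hV hW hc
  simpa only [pressure, Fintype.card_fin] using
    entropic_uncertainty_weighted_localized_general hπ hτ hv hw
      (fun k => Finset.le_sup' v (Finset.mem_univ k))
      (fun j => Finset.le_sup' w (Finset.mem_univ j)) hU
      (fun j k => Finset.le_sup' (fun jk : Fin M × Fin N =>
        w jk.1 * v jk.2 * ‖τ jk.1 ∘L U ∘L adjoint (π jk.2) ∘L O‖) (Finset.mem_univ (j, k)))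
      hψ hloc
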